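/- arXiv:math/0401250 — 3 statements merged into one kernel-verified Lean document; each statement's English description precedes it below -/
import Mathlib

section
/- Let n ≥ 1, s > 0 and 0 ≤ ν < s. Let g : ℝ^n → ℝ^n be continuous on the closed ball B̄(0,s) and satisfy ‖g(x) − x‖ ≤ ν for every x ∈ B̄(0,s). Then the open ball B(0, s − ν) is contained in the image g(B̄(0,s)). -/
open Metric

open MeasureTheory Polynomial Topology

theorem Polynomial.exists_quadrature_weights (N : ℕ) {δ : ℝ} (hδ : 0 < δ) :
    ∃ (S : Finset ℝ) (w : ℝ → ℝ), (∀ t ∈ S, 0 < t ∧ t < δ) ∧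
      ∀ p : ℝ[X], p.natDegree ≤ N → p.eval 1 = ∑ t ∈ S, w t * p.eval t := by
  obtain ⟨S, hS, hcard⟩ := (Set.Ioo_infinite hδ).exists_subset_card_eq (N + 1)
  refine ⟨S, fun t ↦ (Lagrange.basis S id t).eval 1, fun t ht ↦ hS ht, fun p hp ↦ ?_⟩
  have hdeg : p.degree < S.card := by
    rw [hcard]
    exact degree_le_natDegree.trans_lt (by exact_mod_cast Nat.lt_succ_of_le hp)
  have h := congrArg (eval 1) (Lagrange.eq_interpolate (v := id) Function.injective_id.injOn hdeg)
  rw [h, Lagrange.interpolate_apply, eval_finsetSum]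
  simp [mul_comm]

section

variable {E : Type*} [NormedAddCommGroup E]

theorem ContinuousLinearMap.exists_polynomial_eval_eq_det_id_add_smul [NormedSpace ℝ E]
    [FiniteDimensional ℝ E] (A : E →L[ℝ] E) :
    ∃ p : ℝ[X], p.natDegree ≤ Module.finrank ℝ E ∧
      ∀ t : ℝ, p.eval t = (ContinuousLinearMap.id ℝ E + t • A).det := by
  let b := Module.finBasis ℝ E
  let M := LinearMap.toMatrix b b (A : E →ₗ[ℝ] E)
  refine ⟨((X : ℝ[X]) • M.map C + (1 : Matrix _ _ ℝ).map C).det, ?_, fun t ↦ ?_⟩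
  · simpa using natDegree_det_X_add_C_le M 1
  · rw [ContinuousLinearMap.det, ← LinearMap.det_toMatrix b, ← coe_evalRingHom, RingHom.map_det]
    congr 1
    ext i j
    simp [M, Matrix.one_apply, LinearMap.toMatrix_apply, Finsupp.single_apply, apply_ite,
      Module.Basis.repr_self, eq_comm]
    split_ifs <;> ring

/-- A Lipschitz map with constant less than one, added to the identity, is bijective. -/
theorem LipschitzWith.bijective_add_id [NormedSpace ℝ E] [CompleteSpace E] {K : NNReal}
    {u : E → E} (hu : LipschitzWith K u) (hK : K < 1) :
    Function.Bijective fun x ↦ x + u x := by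
  have happ : ApproximatesLinearOn (fun x ↦ x + u x)
      ((ContinuousLinearEquiv.refl ℝ E : E ≃L[ℝ] E) : E →L[ℝ] E) Set.univ K := by
    rw [ApproximatesLinearOn.approximatesLinearOn_iff_lipschitzOnWith]
    convert hu.lipschitzOnWith (s := Set.univ) using 1
    ext x
    simp
  have hc : Subsingleton E ∨
      K < ‖((ContinuousLinearEquiv.refl ℝ E).symm : E →L[ℝ] E)‖₊⁻¹ := by
    rcases subsingleton_or_nontrivial E with h | h
    · exact .inl h
    · right
      have : ‖((ContinuousLinearEquiv.refl ℝ E).symm : E →L[ℝ] E)‖₊ = 1 := by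
        ext; simp
      simpa [this] using hK
  exact ⟨Set.injOn_univ.1 (happ.injOn hc), happ.surjective hc⟩

theorem Function.Bijective.image_eq_of_eqOn_compl {α : Type*} {f : α → α}
    (hf : Function.Bijective f) {s : Set α} (hs : ∀ x ∉ s, f x = x) : f '' s = s := by
  apply Set.Subset.antisymm
  · rintro _ ⟨x, hx, rfl⟩
    by_contra hfx
    exact hfx (by rwa [hf.1 (hs _ hfx)])
  · intro y hy
    obtain ⟨x, rfl⟩ := hf.2 y
    by_cases hx : x ∈ s
    · exact ⟨x, hx, rfl⟩
    · exact absurd (hs x hx ▸ hy) hx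

end

section

variable {E : Type*} [NormedAddCommGroup E] [InnerProductSpace ℝ E] [FiniteDimensional ℝ E]

theorem exists_polynomial_eval_eq_pow_mul_det (x v : E) (A : E →L[ℝ] E) (c : ℝ) (k : ℕ) :
    ∃ p : ℝ[X], p.natDegree ≤ 2 * k + Module.finrank ℝ E ∧ ∀ t : ℝ, p.eval t =
      (c - ‖x + t • v‖ ^ 2) ^ k * (ContinuousLinearMap.id ℝ E + t • A).det := by
  obtain ⟨q, hq, hqe⟩ := A.exists_polynomial_eval_eq_det_id_add_smul
  let r : ℝ[X] := C (-‖v‖ ^ 2) * X ^ 2 + C (-2 * inner ℝ x v) * X + C (c - ‖x‖ ^ 2)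
  refine ⟨r ^ k * q, ?_, fun t ↦ ?_⟩
  · have hr : r.natDegree ≤ 2 := natDegree_quadratic_le
    calc _ ≤ (r ^ k).natDegree + q.natDegree := natDegree_mul_le
      _ ≤ k * 2 + Module.finrank ℝ E := by
        gcongr
        exact natDegree_pow_le_of_le k hr
      _ = _ := by ring
  · rw [eval_mul, eval_pow, hqe]
    congr 2
    simp only [r, eval_add, eval_mul, eval_C, eval_pow, eval_X]
    rw [norm_add_sq_real, inner_smul_right, norm_smul, mul_pow, Real.norm_eq_abs, sq_abs]
    ring

/-- Integrals of powers of `c - ‖·‖ ^ 2` are preserved by `C¹` perturbations of the identity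
supported in the domain of integration, when the Jacobian determinant is counted with sign. -/
theorem integral_pow_mul_det_id_add_fderiv_eq [MeasurableSpace E] [BorelSpace E] (μ : Measure E)
    [μ.IsAddHaarMeasure] {h : E → E} (hh : ContDiff ℝ 1 h)
    (hsupp : HasCompactSupport h) {s : Set E} (hs : IsCompact s) (hzero : ∀ x ∉ s, h x = 0)
    (c : ℝ) (k : ℕ) :
    ∫ x in s, (c - ‖x + h x‖ ^ 2) ^ k * (ContinuousLinearMap.id ℝ E + fderiv ℝ h x).det ∂μ =
      ∫ x in s, (c - ‖x‖ ^ 2) ^ k ∂μ := by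
  obtain ⟨K, hK⟩ := (hsupp.fderiv ℝ).exists_bound_of_continuous (hh.continuous_fderiv one_ne_zero)
  obtain ⟨L, hL⟩ := hh.lipschitzWith_of_hasCompactSupport hsupp one_ne_zero
  have hcd : Continuous (fderiv ℝ h) := hh.continuous_fderiv one_ne_zero
  have hcont := hh.continuous
  obtain ⟨η, hη, hdet⟩ : ∃ η > 0, ∀ A : E →L[ℝ] E, ‖A‖ < η →
      0 < (ContinuousLinearMap.id ℝ E + A).det := by
    have hc : Continuous fun A : E →L[ℝ] E ↦ (ContinuousLinearMap.id ℝ E + A).det :=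
      ContinuousLinearMap.continuous_det.comp (continuous_const.add continuous_id)
    have h0 : ∀ᶠ A : E →L[ℝ] E in 𝓝 0, 0 < (ContinuousLinearMap.id ℝ E + A).det :=
      hc.continuousAt.eventually_const_lt (by simp [ContinuousLinearMap.det])
    obtain ⟨η, hη, H⟩ := Metric.eventually_nhds_iff.1 h0
    exact ⟨η, hη, fun A hA ↦ H (by simpa using hA)⟩
  let P : ℝ → E → ℝ := fun t x ↦
    (c - ‖x + t • h x‖ ^ 2) ^ k * (ContinuousLinearMap.id ℝ E + t • fderiv ℝ h x).det
  have hPc (t : ℝ) : Continuous (P t) := by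
    have : Continuous fun x ↦ (ContinuousLinearMap.id ℝ E + t • fderiv ℝ h x).det :=
      ContinuousLinearMap.continuous_det.comp (by fun_prop)
    fun_prop
  have hPi (t : ℝ) : IntegrableOn (P t) s μ := (hPc t).continuousOn.integrableOn_compact hs
  have hK0 : 0 ≤ K := (norm_nonneg _).trans (hK 0)
  let δ : ℝ := min (η / (K + 1)) (1 / (L + 1))
  have hδ : 0 < δ := lt_min (by positivity) (by positivity)
  have hsmall (t : ℝ) (ht0 : 0 < t) (htδ : t < δ) :
      ∫ x in s, P t x ∂μ = ∫ x in s, (c - ‖x‖ ^ 2) ^ k ∂μ := by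
    have hbij : Function.Bijective fun x ↦ x + t • h x := by
      have hl : LipschitzWith (‖t‖₊ * L) fun x ↦ t • h x :=
        (lipschitzWith_smul t).comp hL
      refine hl.bijective_add_id ?_
      rw [← NNReal.coe_lt_coe]
      have h1 := htδ.trans_le (min_le_right _ _)
      rw [lt_div_iff₀ (by positivity)] at h1
      simp only [NNReal.coe_mul, coe_nnnorm, Real.norm_eq_abs, abs_of_pos ht0, NNReal.coe_one]
      linarith
    have himg : (fun x ↦ x + t • h x) '' s = s :=
      hbij.image_eq_of_eqOn_compl fun x hx ↦ by simp [hzero x hx]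
    have hder (x : E) : HasFDerivAt (fun x ↦ x + t • h x)
        (ContinuousLinearMap.id ℝ E + t • fderiv ℝ h x) x :=
      (hasFDerivAt_id x).add
        (((hh.differentiable one_ne_zero) x).hasFDerivAt.const_smul t)
    have hcv := integral_image_eq_integral_abs_det_fderiv_smul μ hs.measurableSet
      (fun x _ ↦ (hder x).hasFDerivWithinAt) hbij.1.injOn (fun x ↦ (c - ‖x‖ ^ 2) ^ k)
    rw [himg] at hcv
    rw [hcv]
    congr 1 with x
    have hpos : 0 < (ContinuousLinearMap.id ℝ E + t • fderiv ℝ h x).det := by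
      apply hdet
      have h1 := htδ.trans_le (min_le_left _ _)
      rw [lt_div_iff₀ (by positivity)] at h1
      rw [norm_smul, Real.norm_eq_abs, abs_of_pos ht0]
      nlinarith [hK x]
    rw [abs_of_pos hpos, smul_eq_mul, mul_comm]
  obtain ⟨S, w, hS, hw⟩ := Polynomial.exists_quadrature_weights (2 * k + Module.finrank ℝ E) hδ
  have hw1 : ∑ t ∈ S, w t = 1 := by simpa using (hw 1 (by simp)).symm
  have hP1 (x : E) : P 1 x = ∑ t ∈ S, w t * P t x := by
    obtain ⟨p, hp, hpe⟩ := exists_polynomial_eval_eq_pow_mul_det x (h x) (fderiv ℝ h x) c k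
    simpa only [hpe] using hw p hp
  calc _ = ∫ x in s, P 1 x ∂μ := by simp [P]
    _ = ∑ t ∈ S, w t * ∫ x in s, P t x ∂μ := by
      simp_rw [hP1]
      rw [integral_finsetSum _ fun t _ ↦ (hPi t).const_mul _]
      simp_rw [integral_const_mul]
    _ = ∑ t ∈ S, w t * ∫ x in s, (c - ‖x‖ ^ 2) ^ k ∂μ :=
      Finset.sum_congr rfl fun t ht ↦ by rw [hsmall t (hS t ht).1 (hS t ht).2]
    _ = _ := by rw [← Finset.sum_mul, hw1, one_mul]

/-- A `C¹` compactly supported perturbation of the identity is not bounded away from zero. -/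
theorem not_forall_le_norm_add_of_contDiff {h : E → E} (hh : ContDiff ℝ 1 h)
    (hsupp : HasCompactSupport h) {ε : ℝ} (hε : 0 < ε) : ¬ ∀ x, ε ≤ ‖x + h x‖ := by
  intro hle
  borelize E
  let μ : Measure E := Measure.addHaar
  obtain ⟨R₀, hR₀⟩ := hsupp.isCompact.isBounded.subset_closedBall (0 : E)
  obtain ⟨K, hK⟩ := hsupp.exists_bound_of_continuous hh.continuous
  have hK0 : 0 ≤ K := (norm_nonneg _).trans (hK 0)
  set R := max R₀ ε
  have hεR : ε ≤ R := le_max_right _ _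
  set s : Set E := closedBall 0 R
  have hs : IsCompact s := isCompact_closedBall 0 R
  have hzero (x : E) (hx : x ∉ s) : h x = 0 :=
    image_eq_zero_of_notMem_tsupport fun hx' ↦
      hx (closedBall_subset_closedBall (le_max_left _ _) (hR₀ hx'))
  set c := (R + K + 1) ^ 2
  have hcont := hh.continuous
  have hdc : Continuous fun x ↦ (ContinuousLinearMap.id ℝ E + fderiv ℝ h x).det :=
    ContinuousLinearMap.continuous_det.comp
      (continuous_const.add (hh.continuous_fderiv one_ne_zero))
  obtain ⟨D, hD⟩ := hs.exists_bound_of_continuousOn hdc.continuousOn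
  have hac : 0 < c - ε ^ 2 := by
    have : ε ^ 2 < (R + K + 1) ^ 2 := by gcongr; linarith
    linarith
  have hm : 0 < μ.real (closedBall 0 (ε / 2)) :=
    ENNReal.toReal_pos (measure_closedBall_pos μ 0 (half_pos hε)).ne'
      (isCompact_closedBall _ _).measure_ne_top
  have key (k : ℕ) : (c - (ε / 2) ^ 2) ^ k * μ.real (closedBall 0 (ε / 2)) ≤
      (c - ε ^ 2) ^ k * D * μ.real s := by
    have hint : IntegrableOn (fun x : E ↦ (c - ‖x‖ ^ 2) ^ k) s μ :=
      (by fun_prop : Continuous _).continuousOn.integrableOn_compact hs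
    have hsub : closedBall (0 : E) (ε / 2) ⊆ s := closedBall_subset_closedBall (by linarith)
    calc _ = ∫ _ in closedBall (0 : E) (ε / 2), (c - (ε / 2) ^ 2) ^ k ∂μ := by
          rw [setIntegral_const, smul_eq_mul, mul_comm]
      _ ≤ ∫ x in closedBall (0 : E) (ε / 2), (c - ‖x‖ ^ 2) ^ k ∂μ := by
        refine setIntegral_mono_on (integrableOn_const (isCompact_closedBall _ _).measure_ne_top)
          (hint.mono_set hsub) isClosed_closedBall.measurableSet fun x hx ↦ ?_
        rw [mem_closedBall_zero_iff] at hx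
        have : (ε / 2) ^ 2 ≤ ε ^ 2 := by gcongr; linarith
        gcongr
        linarith
      _ ≤ ∫ x in s, (c - ‖x‖ ^ 2) ^ k ∂μ := by
        refine setIntegral_mono_set hint ?_ hsub.eventuallyLE
        filter_upwards [ae_restrict_mem hs.measurableSet] with x hx
        rw [mem_closedBall_zero_iff] at hx
        have : ‖x‖ ^ 2 ≤ (R + K + 1) ^ 2 := by gcongr; linarith
        exact pow_nonneg (by linarith) _
      _ = ∫ x in s, (c - ‖x + h x‖ ^ 2) ^ k *
          (ContinuousLinearMap.id ℝ E + fderiv ℝ h x).det ∂μ :=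
        (integral_pow_mul_det_id_add_fderiv_eq μ hh hsupp hs hzero c k).symm
      _ ≤ ‖∫ x in s, (c - ‖x + h x‖ ^ 2) ^ k *
          (ContinuousLinearMap.id ℝ E + fderiv ℝ h x).det ∂μ‖ := Real.le_norm_self _
      _ ≤ _ := by
        refine norm_setIntegral_le_of_norm_le_const hs.measure_lt_top fun x hx ↦ ?_
        have hDx := hD x hx
        rw [mem_closedBall_zero_iff] at hx
        have h1 : ‖x + h x‖ ≤ R + K + 1 := by linarith [norm_add_le x (h x), hK x]
        have h2 : ‖x + h x‖ ^ 2 ≤ (R + K + 1) ^ 2 := by gcongr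
        have h3 : ε ^ 2 ≤ ‖x + h x‖ ^ 2 := by gcongr; exact hle x
        rw [norm_mul, norm_pow, Real.norm_of_nonneg (by linarith : 0 ≤ c - ‖x + h x‖ ^ 2)]
        gcongr
  have hba : 1 < (c - (ε / 2) ^ 2) / (c - ε ^ 2) := by
    rw [one_lt_div hac]
    nlinarith
  obtain ⟨k, hk⟩ := pow_unbounded_of_one_lt (D * μ.real s / μ.real (closedBall 0 (ε / 2))) hba
  rw [div_pow, div_lt_div_iff₀ hm (by positivity)] at hk
  linarith [key k]

/-- A continuous compactly supported perturbation of the identity has a zero. -/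
theorem HasCompactSupport.exists_add_eq_zero {f : E → E} (hsupp : HasCompactSupport f)
    (hf : Continuous f) : ∃ x, x + f x = 0 := by
  by_contra! hne
  obtain ⟨R, hR⟩ := hsupp.isCompact.isBounded.subset_closedBall (0 : E)
  have hcompact : IsCompact (closedBall (0 : E) (max R 1)) := isCompact_closedBall _ _
  obtain ⟨x₀, -, hx₀⟩ := hcompact.exists_isMinOn ⟨0, by simp⟩
    (by fun_prop : Continuous fun x ↦ ‖x + f x‖).continuousOn
  set m := min ‖x₀ + f x₀‖ 1
  have hm : 0 < m := lt_min (norm_pos_iff.2 (hne x₀)) one_pos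
  have hle (x : E) : m ≤ ‖x + f x‖ := by
    by_cases hx : x ∈ closedBall (0 : E) (max R 1)
    · exact (min_le_left _ _).trans (hx₀ hx)
    · have hfx : f x = 0 := image_eq_zero_of_notMem_tsupport fun hx' ↦
        hx (closedBall_subset_closedBall (le_max_left _ _) (hR hx'))
      rw [mem_closedBall_zero_iff, not_le] at hx
      rw [hfx, add_zero]
      exact (min_le_right _ _).trans ((le_max_right _ _).trans hx.le)
  obtain ⟨h, hh, happ, hsub⟩ := hf.exists_contDiff_approx 1
    (continuous_const (y := m / 2)) fun _ ↦ half_pos hm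
  refine not_forall_le_norm_add_of_contDiff hh (hsupp.mono hsub) (half_pos hm) fun x ↦ ?_
  have h1 := happ x
  rw [dist_eq_norm, norm_sub_rev] at h1
  have h2 : ‖x + f x‖ ≤ ‖x + h x‖ + ‖f x - h x‖ := by
    simpa using norm_add_le (x + h x) (f x - h x)
  linarith [hle x]

/-- **Brouwer fixed point theorem** for maps of a ball into a strictly smaller ball. -/
theorem exists_fixedPoint_of_norm_le {r s : ℝ} (hrs : r < s) {φ : E → E}
    (hφ : ContinuousOn φ (closedBall 0 s)) (hle : ∀ x ∈ closedBall 0 s, ‖φ x‖ ≤ r) (hs : 0 < s) :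
    ∃ x ∈ closedBall 0 s, φ x = x := by
  let p : E → E := fun x ↦ (s / max s ‖x‖) • x
  have hmax (x : E) : 0 < max s ‖x‖ := lt_max_of_lt_left hs
  have hp (x : E) : p x ∈ closedBall 0 s := by
    rw [mem_closedBall_zero_iff, norm_smul, Real.norm_of_nonneg (by have := hmax x; positivity),
      div_mul_eq_mul_div, div_le_iff₀ (hmax x)]
    gcongr
    exact le_max_right _ _
  have hpc : Continuous p := by
    have : Continuous fun x : E ↦ s / max s ‖x‖ :=
      continuous_const.div (by fun_prop) fun x ↦ (hmax x).ne'
    fun_prop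
  have hφp : Continuous fun x ↦ φ (p x) := hφ.comp_continuous hpc hp
  let χ : E → ℝ := fun x ↦ max 0 (min 1 ((s - ‖x‖) / (s - r)))
  have hsr : 0 < s - r := sub_pos.2 hrs
  have hχ : Continuous χ := by fun_prop
  have hχ0 (x : E) : 0 ≤ χ x := le_max_left _ _
  have hχ1 (x : E) : χ x ≤ 1 := max_le zero_le_one (min_le_left _ _)
  have hsupp : HasCompactSupport fun x ↦ -(χ x • φ (p x)) := by
    refine HasCompactSupport.intro (isCompact_closedBall 0 s) fun x hx ↦ ?_
    rw [mem_closedBall_zero_iff, not_le] at hx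
    have : χ x = 0 := max_eq_left
      ((min_le_right _ _).trans (div_nonpos_of_nonpos_of_nonneg (by linarith) hsr.le))
    simp [this]
  obtain ⟨x, hx⟩ := hsupp.exists_add_eq_zero (hχ.smul hφp).neg
  rw [← sub_eq_add_neg, sub_eq_zero] at hx
  have hxr : ‖x‖ ≤ r := by
    rw [hx, norm_smul, Real.norm_of_nonneg (hχ0 x)]
    exact (mul_le_of_le_one_left (norm_nonneg _) (hχ1 x)).trans (hle _ (hp x))
  have hχx : χ x = 1 := by
    have : 1 ≤ (s - ‖x‖) / (s - r) := (one_le_div hsr).2 (by linarith)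
    simp [χ, min_eq_left this]
  have hpx : p x = x := by
    simp [p, max_eq_left (hxr.trans hrs.le), hs.ne']
  refine ⟨x, mem_closedBall_zero_iff.2 (hxr.trans hrs.le), ?_⟩
  rw [hχx, hpx, one_smul] at hx
  exact hx.symm

end

theorem stmt_5 (n : ℕ) (hn : 1 ≤ n) (s ν : ℝ) (hs : 0 < s) (hν : 0 ≤ ν) (hνs : ν < s)
    (g : EuclideanSpace ℝ (Fin n) → EuclideanSpace ℝ (Fin n))
    (hcont : ContinuousOn g (closedBall (0 : EuclideanSpace ℝ (Fin n)) s))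
    (hclose : ∀ x ∈ closedBall (0 : EuclideanSpace ℝ (Fin n)) s, ‖g x - x‖ ≤ ν) :
    ball (0 : EuclideanSpace ℝ (Fin n)) (s - ν) ⊆
      g '' closedBall (0 : EuclideanSpace ℝ (Fin n)) s := by
  intro y hy
  rw [mem_ball_zero_iff] at hy
  obtain ⟨x, hx, hfix⟩ := exists_fixedPoint_of_norm_le (r := ‖y‖ + ν) (by linarith)
    (φ := fun x ↦ y - (g x - x)) (by fun_prop)
    (fun x hx ↦ (norm_sub_le _ _).trans (by linarith [hclose x hx])) hs
  refine ⟨x, hx, ?_⟩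
  have h0 : y - g x = 0 := by
    have := sub_eq_zero.2 hfix
    rw [← this]
    abel
  exact (sub_eq_zero.1 h0).symm
end

section
/- Let k ≥ 1 and identify ℂ^k with its underlying Euclidean space. Let A and B be continuous linear automorphisms of ℂ^k, let s > 0, s' ≥ 0 and ν ≥ 0 satisfy s' + ‖(B∘A)⁻¹‖·ν < s, and let g : ℂ^k → ℂ^k be continuous on the compact set A[B̄(0,s)] with ‖g(y) − B(y)‖ ≤ ν for every y ∈ A[B̄(0,s)]. Then (B∘A)[B(0,s')] ⊆ g(A[B(0,s)]). -/
open Metric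
open Set MeasureTheory
open scoped NNReal RealInnerProductSpace

section Lip
variable {E F : Type*} [NormedAddCommGroup E] [NormedSpace ℝ E]
  [NormedAddCommGroup F]

/-- A Lipschitz function on a closed set which vanishes on the frontier stays Lipschitz, with the same
constant, when extended by zero. -/
lemma LipschitzOnWith.indicator_of_frontier_eq_zero {K : ℝ≥0} {f : E → F} {s : Set E}
    (hf : LipschitzOnWith K f s) (hs : IsClosed s) (h0 : ∀ x ∈ frontier s, f x = 0) :
    LipschitzWith K (s.indicator f) := by
  have key : ∀ x ∈ s, ∀ y ∉ s, dist (f x) 0 ≤ K * dist x y := by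
    intro x hx y hy
    obtain ⟨z, hz, hzf⟩ : (segment ℝ x y ∩ frontier s).Nonempty := by
      by_contra hne
      rw [not_nonempty_iff_eq_empty, ← disjoint_iff_inter_eq_empty] at hne
      have hint : ∀ z ∈ segment ℝ x y, z ∈ s → z ∈ interior s := fun z hz hzs => by
        by_contra hzi
        exact disjoint_left.1 hne hz ⟨subset_closure hzs, hzi⟩
      obtain ⟨z, -, hz, hz'⟩ := (convex_segment x y).isPreconnected _ _ isOpen_interior
        hs.isOpen_compl (fun z hz => or_iff_not_imp_right.2 fun hzs => hint z hz (not_not.1 hzs))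
        ⟨x, left_mem_segment ℝ x y, hint x (left_mem_segment ℝ x y) hx⟩
        ⟨y, right_mem_segment ℝ x y, hy⟩
      exact hz' (interior_subset hz)
    rw [← h0 z hzf]
    refine (hf.dist_le_mul x hx z (hs.frontier_subset hzf)).trans ?_
    have := dist_add_dist_of_mem_segment hz
    gcongr
    linarith [dist_nonneg (x := z) (y := y)]
  refine LipschitzWith.of_dist_le_mul fun x y => ?_
  by_cases hx : x ∈ s <;> by_cases hy : y ∈ s
  · simpa [hx, hy] using hf.dist_le_mul x hx y hy
  · simpa [hx, hy] using key x hx y hy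
  · simpa [hx, hy, dist_comm] using key y hy x hx
  · simp [hx, hy]; positivity

lemma LipschitzWith.bijective_id_add [CompleteSpace E] {K : ℝ≥0} {h : E → E}
    (hh : LipschitzWith K h) (hK : K < 1) : Function.Bijective (fun x => x + h x) := by
  have happ : ApproximatesLinearOn (fun x => x + h x)
      ((ContinuousLinearEquiv.refl ℝ E : E ≃L[ℝ] E) : E →L[ℝ] E) univ K := by
    rw [ApproximatesLinearOn.approximatesLinearOn_iff_lipschitzOnWith, lipschitzOnWith_univ]
    convert! hh using 1
    ext x
    simp
  have hc : Subsingleton E ∨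
      K < ‖((ContinuousLinearEquiv.refl ℝ E).symm : E →L[ℝ] E)‖₊⁻¹ := by
    rcases subsingleton_or_nontrivial E with hE | hE
    · exact Or.inl hE
    · right
      have : ‖((ContinuousLinearEquiv.refl ℝ E).symm : E →L[ℝ] E)‖₊ = 1 :=
        ContinuousLinearMap.nnnorm_id
      rwa [this, inv_one]
  exact ⟨injOn_univ.1 (happ.injOn hc), happ.surjective hc⟩

lemma Function.Bijective.image_eq_of_forall_notMem {α : Type*} {f : α → α} {s : Set α}
    (hf : Function.Bijective f) (hs : ∀ x ∉ s, f x = x) : f '' s = s := by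
  have hc : f '' sᶜ = sᶜ := by
    exact (image_congr (g := id) hs).trans (image_id _)
  rw [image_compl_eq hf] at hc
  exact compl_injective hc

end Lip

section Det
variable {E : Type*} [NormedAddCommGroup E] [NormedSpace ℝ E]

/-- `det (1 + A)` by Lagrange interpolation of the polynomial `t ↦ det (1 + t • A)`. -/
lemma ContinuousLinearMap.det_one_add_eq_sum_lagrange [FiniteDimensional ℝ E] {v : ℕ → ℝ}
    (hv : Function.Injective v) (A : E →L[ℝ] E) :
    (1 + A).det = ∑ j ∈ Finset.range (Module.finrank ℝ E + 1), (1 + v j • A).det *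
      (Lagrange.basis (Finset.range (Module.finrank ℝ E + 1)) v j).eval 1 := by
  classical
  let b := Module.finBasis ℝ E
  let M := LinearMap.toMatrix b b (A : E →ₗ[ℝ] E)
  let p : Polynomial ℝ := Matrix.det ((Polynomial.X : Polynomial ℝ) • M.map Polynomial.C +
    (1 : Matrix _ _ ℝ).map Polynomial.C)
  have hp : ∀ t : ℝ, p.eval t = (1 + t • A).det := by
    intro t
    have : ((1 + t • A : E →L[ℝ] E)).det = (1 + t • M).det := by
      rw [ContinuousLinearMap.det, ← LinearMap.det_toMatrix b]
      congr 1
      have : ((1 + t • A : E →L[ℝ] E) : E →ₗ[ℝ] E) = 1 + t • (A : E →ₗ[ℝ] E) := rfl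
      rw [this]
      simp [M, LinearMap.toMatrix_one]
    rw [this, ← Polynomial.coe_evalRingHom, RingHom.map_det]
    congr 1
    ext i j
    obtain rfl | hij := eq_or_ne i j
    · simp; ring
    · simp [hij]; ring
  have hdeg : p.degree < (Finset.range (Module.finrank ℝ E + 1)).card := by
    refine (Polynomial.degree_le_natDegree).trans_lt ?_
    have := Polynomial.natDegree_det_X_add_C_le M 1
    rw [Finset.card_range]
    rw [Fintype.card_fin] at this
    exact_mod_cast Nat.lt_succ_of_le this
  have h1 := congrArg (Polynomial.eval 1) (Lagrange.eq_interpolate hv.injOn hdeg)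
  rw [hp, one_smul, Lagrange.interpolate_apply, Polynomial.eval_finsetSum] at h1
  rw [h1]
  exact Finset.sum_congr rfl fun j _ => by rw [Polynomial.eval_mul, Polynomial.eval_C, hp]

lemma Lagrange.sum_eval_basis {F : Type*} [Field F] {v : ℕ → F} (hv : Function.Injective v)
    (n : ℕ) (x : F) :
    ∑ j ∈ Finset.range (n + 1), (Lagrange.basis (Finset.range (n + 1)) v j).eval x = 1 := by
  rw [← Polynomial.eval_finsetSum, Lagrange.sum_basis hv.injOn (by simp), Polynomial.eval_one]

lemma ContinuousLinearMap.exists_det_one_add_pos :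
    ∃ ε > 0, ∀ A : E →L[ℝ] E, ‖A‖ < ε → 0 < (1 + A).det := by
  have hc : ContinuousAt (fun A : E →L[ℝ] E => (1 + A).det) 0 := by
    have := ContinuousLinearMap.continuous_det (𝕜 := ℝ) (E := E)
    exact (this.comp (continuous_const.add continuous_id)).continuousAt
  have h1 : (0 : ℝ) < (1 + (0 : E →L[ℝ] E)).det := by
    rw [add_zero]
    have : (1 : E →L[ℝ] E).det = 1 := LinearMap.det_id
    rw [this]; exact one_pos
  obtain ⟨ε, hε, h⟩ := Metric.mem_nhds_iff.1 (hc.eventually (lt_mem_nhds h1))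
  exact ⟨ε, hε, fun A hA => h (by simpa using hA)⟩

end Det

section NoRetraction
variable {E : Type*} [NormedAddCommGroup E] [NormedSpace ℝ E] [FiniteDimensional ℝ E]
  [MeasurableSpace E] [BorelSpace E]

lemma setIntegral_ball_det_one_add_smul_fderiv (μ : Measure E) [μ.IsAddHaarMeasure]
    {h : E → E} {R : ℝ} {K : ℝ≥0} (hd : ∀ x ∈ ball 0 R, DifferentiableAt ℝ h x)
    (hK : LipschitzWith K ((closedBall 0 R).indicator h))
    (h0 : ∀ x ∈ sphere 0 R, h x = 0) {t : ℝ} (ht : 0 ≤ t) (htK : t * K < 1)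
    (hpos : ∀ x ∈ ball 0 R, 0 < (1 + t • fderiv ℝ h x).det) :
    ∫ x in ball 0 R, (1 + t • fderiv ℝ h x).det ∂μ = μ.real (ball 0 R) := by
  set g := (closedBall 0 R).indicator h with hg
  have hbij : Function.Bijective (fun x => x + t • g x) := by
    lift t to ℝ≥0 using ht
    refine LipschitzWith.bijective_id_add (K := t * K) (LipschitzWith.of_dist_le_mul ?_)
      (by exact_mod_cast htK)
    intro x y
    rw [dist_smul₀, NNReal.norm_eq, NNReal.coe_mul, mul_assoc]
    exact mul_le_mul_of_nonneg_left (hK.dist_le_mul x y) t.2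
  have himg : (fun x => x + t • g x) '' ball 0 R = ball 0 R := by
    refine hbij.image_eq_of_forall_notMem fun x hx => ?_
    have : g x = 0 := by
      by_cases hxc : x ∈ closedBall 0 R
      · rw [hg, indicator_of_mem hxc]
        exact h0 x (le_antisymm hxc (not_lt.1 hx))
      · exact indicator_of_notMem hxc _
    simp [this]
  have hder : ∀ x ∈ ball 0 R, HasFDerivWithinAt (fun x => x + t • g x)
      (1 + t • fderiv ℝ h x) (ball 0 R) x := by
    intro x hx
    have h1 : HasFDerivAt (fun x => x + t • h x) (1 + t • fderiv ℝ h x) x :=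
      (hasFDerivAt_id x).add ((hd x hx).hasFDerivAt.const_smul t)
    refine h1.hasFDerivWithinAt.congr (fun y hy => ?_) ?_
    · rw [hg, indicator_of_mem (ball_subset_closedBall hy)]
    · rw [hg, indicator_of_mem (ball_subset_closedBall hx)]
  have := integral_image_eq_integral_abs_det_fderiv_smul μ measurableSet_ball hder
    hbij.injective.injOn (fun _ => (1 : ℝ))
  rw [himg, setIntegral_const, smul_eq_mul, mul_one] at this
  rw [this]
  refine setIntegral_congr_fun measurableSet_ball fun x hx => ?_
  simp [abs_of_pos (hpos x hx)]

/-- If `h` is `C¹` on a closed ball and vanishes on its boundary, then the Jacobian determinant of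
`id + h` integrates to the volume of the ball. -/
lemma setIntegral_ball_det_one_add_fderiv (μ : Measure E) [μ.IsAddHaarMeasure]
    {h : E → E} {R : ℝ} (hR : R ≠ 0) (hd : ∀ x ∈ closedBall 0 R, ContDiffAt ℝ 1 h x)
    (h0 : ∀ x ∈ sphere 0 R, h x = 0) :
    ∫ x in ball 0 R, (1 + fderiv ℝ h x).det ∂μ = μ.real (ball 0 R) := by
  have hdc : ContinuousOn (fderiv ℝ h) (closedBall 0 R) := fun x hx =>
    ((hd x hx).continuousAt_fderiv one_ne_zero).continuousWithinAt
  obtain ⟨C, hC⟩ := (isCompact_closedBall (0 : E) R).exists_bound_of_continuousOn hdc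
  set K : ℝ≥0 := C.toNNReal
  have hCK : ∀ x ∈ closedBall 0 R, ‖fderiv ℝ h x‖ ≤ K := fun x hx =>
    (hC x hx).trans (Real.le_coe_toNNReal C)
  have hlip : LipschitzWith K ((closedBall 0 R).indicator h) := by
    refine LipschitzOnWith.indicator_of_frontier_eq_zero ?_ isClosed_closedBall ?_
    · exact (convex_closedBall 0 R).lipschitzOnWith_of_nnnorm_fderiv_le
        (fun x hx => (hd x hx).differentiableAt one_ne_zero) hCK
    · rwa [frontier_closedBall 0 hR]
  obtain ⟨ε, hε, hdet⟩ := ContinuousLinearMap.exists_det_one_add_pos (E := E)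
  set δ : ℝ := min 1 ε / (K + 1) with hδ
  have hδ0 : 0 < δ := by positivity
  have hδK : δ * K < min 1 ε := by
    rw [hδ, div_mul_eq_mul_div, div_lt_iff₀ (by positivity)]
    have : 0 < min 1 ε := by positivity
    linarith
  set v : ℕ → ℝ := fun j => δ / (j + 1) with hv
  have hv0 : ∀ j, 0 ≤ v j := fun j => by positivity
  have hvK : ∀ j, v j * K < min 1 ε := fun j => by
    refine lt_of_le_of_lt ?_ hδK
    gcongr
    exact div_le_self hδ0.le (by simp)
  have hvinj : Function.Injective v := fun i j hij => by
    simpa [hv, div_eq_mul_inv, hδ0.ne'] using hij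
  have hint : ∀ t : ℝ, IntegrableOn (fun x => (1 + t • fderiv ℝ h x).det) (ball 0 R) μ := by
    intro t
    refine IntegrableOn.mono_set (ContinuousOn.integrableOn_compact
      (isCompact_closedBall 0 R) ?_) ball_subset_closedBall
    exact ContinuousLinearMap.continuous_det.comp_continuousOn
      (continuousOn_const.add (hdc.const_smul t))
  have hvol : ∀ j, ∫ x in ball 0 R, (1 + v j • fderiv ℝ h x).det ∂μ = μ.real (ball 0 R) := by
    intro j
    refine setIntegral_ball_det_one_add_smul_fderiv μ
      (fun x hx => (hd x (ball_subset_closedBall hx)).differentiableAt one_ne_zero) hlip h0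
      (hv0 j) ((hvK j).trans_le (min_le_left _ _)) fun x hx => hdet _ ?_
    rw [norm_smul, Real.norm_of_nonneg (hv0 j)]
    calc v j * ‖fderiv ℝ h x‖ ≤ v j * K :=
          mul_le_mul_of_nonneg_left (hCK x (ball_subset_closedBall hx)) (hv0 j)
      _ < ε := (hvK j).trans_le (min_le_right _ _)
  rw [funext fun x => ContinuousLinearMap.det_one_add_eq_sum_lagrange hvinj (fderiv ℝ h x),
    integral_finsetSum _ fun j _ => (hint (v j)).mul_const _]
  simp_rw [integral_mul_const, hvol, ← Finset.mul_sum, Lagrange.sum_eval_basis hvinj, mul_one]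

end NoRetraction

section Brouwer
variable {E : Type*} [NormedAddCommGroup E] [InnerProductSpace ℝ E] [FiniteDimensional ℝ E]

lemma ContinuousLinearMap.det_eq_zero_of_forall_inner_eq_zero {A : E →L[ℝ] E} {y : E} (hy : y ≠ 0)
    (hA : ∀ x, ⟪y, A x⟫ = 0) : A.det = 0 := by
  by_contra hne
  have hu : IsUnit (A : E →ₗ[ℝ] E) :=
    (LinearMap.isUnit_iff_isUnit_det _).2 (isUnit_iff_ne_zero.2 hne)
  obtain ⟨x, hx⟩ := ((Module.End.isUnit_iff _).1 hu).2 y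
  have := hA x
  rw [show A x = y from hx] at this
  exact hy (inner_self_eq_zero.1 this)

/-- There is no `C¹` retraction of a closed ball onto its boundary sphere. -/
theorem not_exists_contDiffAt_retraction_sphere {R : ℝ} (hR : 0 < R) (r : E → E)
    (hr : ∀ x ∈ closedBall 0 R, ContDiffAt ℝ 1 r x)
    (hmem : ∀ x ∈ closedBall 0 R, r x ∈ sphere 0 R) (hid : ∀ x ∈ sphere 0 R, r x = x) : False := by
  let _ : MeasurableSpace E := borel E
  have : BorelSpace E := ⟨rfl⟩
  have hint := setIntegral_ball_det_one_add_fderiv (volume : Measure E) (h := fun x => r x - x)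
    hR.ne' (fun x hx => (hr x hx).sub contDiffAt_id) (fun x hx => by simp [hid x hx])
  rw [setIntegral_eq_zero_of_forall_eq_zero] at hint
  · exact (ENNReal.toReal_pos (measure_ball_pos volume (0 : E) hR).ne'
      measure_ball_lt_top.ne).ne hint
  intro x hx
  have hd := (hr x (ball_subset_closedBall hx)).differentiableAt one_ne_zero
  have hfd : 1 + fderiv ℝ (fun x => r x - x) x = fderiv ℝ r x := by
    rw [fderiv_fun_sub hd differentiableAt_fun_id, fderiv_fun_id]
    exact add_sub_cancel _ _
  rw [hfd]
  have hn : r x ≠ 0 :=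
    ne_of_mem_sphere (hmem x (ball_subset_closedBall hx)) hR.ne'
  refine ContinuousLinearMap.det_eq_zero_of_forall_inner_eq_zero hn fun w => ?_
  have h1 := (hd.hasFDerivAt.norm_sq)
  have h2 : HasFDerivAt (fun x => ‖r x‖ ^ 2) (0 : E →L[ℝ] ℝ) x := by
    refine (hasFDerivAt_const (R ^ 2) x).congr_of_eventuallyEq ?_
    filter_upwards [isOpen_ball.mem_nhds hx] with y hy
    rw [mem_sphere_zero_iff_norm.1 (hmem y (ball_subset_closedBall hy))]
  have := congrArg (fun L : E →L[ℝ] ℝ => L w) (h1.unique h2)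
  simpa using this

/-- **Brouwer's fixed point theorem** for `C¹` maps sending a closed ball into its interior. -/
theorem ContDiff.exists_fixedPoint_of_mapsTo_ball {R : ℝ} (hR : 0 < R) {f : E → E}
    (hf : ContDiff ℝ 1 f) (hmaps : MapsTo f (closedBall 0 R) (ball 0 R)) :
    ∃ x ∈ closedBall 0 R, f x = x := by
  by_contra! hne
  set u : E → E := fun x => x - f x with hu
  set D : E → ℝ := fun x => ⟪x, u x⟫ ^ 2 + ‖u x‖ ^ 2 * (R ^ 2 - ‖x‖ ^ 2) with hD
  set l : E → ℝ := fun x => (√(D x) - ⟪x, u x⟫) / ‖u x‖ ^ 2 with hl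
  have hu0 : ∀ x ∈ closedBall 0 R, ‖u x‖ ≠ 0 := fun x hx =>
    norm_ne_zero_iff.2 (sub_ne_zero.2 (hne x hx).symm)
  have hsph : ∀ x ∈ sphere 0 R, 0 < ⟪x, u x⟫ := by
    intro x hx
    have hfx := mem_ball_zero_iff.1 (hmaps (sphere_subset_closedBall hx))
    have hxR := mem_sphere_zero_iff_norm.1 hx
    rw [hu, inner_sub_right, real_inner_self_eq_norm_sq, hxR]
    have := real_inner_le_norm x (f x)
    rw [hxR] at this
    nlinarith
  have hDpos : ∀ x ∈ closedBall 0 R, 0 < D x := by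
    intro x hx
    rcases (mem_closedBall_zero_iff.1 hx).eq_or_lt with h | h
    · have := hsph x (mem_sphere_zero_iff_norm.2 h)
      simp only [hD, h, sub_self, mul_zero, add_zero]
      positivity
    · have h1 : 0 < R ^ 2 - ‖x‖ ^ 2 := by nlinarith [norm_nonneg x]
      have h2 := (norm_nonneg (u x)).lt_of_ne' (hu0 x hx)
      simp only [hD]
      positivity
  refine not_exists_contDiffAt_retraction_sphere hR (fun x => x + l x • u x) ?_ ?_ ?_
  · intro x hx
    have huc : ContDiff ℝ 1 u := contDiff_id.sub hf
    have hin : ContDiff ℝ 1 fun x => ⟪x, u x⟫ := contDiff_id.inner ℝ huc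
    have hDc : ContDiff ℝ 1 D := (hin.pow 2).add
      ((huc.norm_sq ℝ).mul (contDiff_const.sub (contDiff_id.norm_sq ℝ)))
    have hlc : ContDiffAt ℝ 1 l x :=
      ((hDc.contDiffAt.sqrt (hDpos x hx).ne').sub hin.contDiffAt).div
        (huc.norm_sq ℝ).contDiffAt (pow_ne_zero 2 (hu0 x hx))
    exact contDiffAt_id.add (hlc.smul huc.contDiffAt)
  · intro x hx
    rw [mem_sphere_zero_iff_norm, ← sq_eq_sq₀ (norm_nonneg _) hR.le, norm_add_sq_real,
      inner_smul_right, norm_smul, mul_pow, Real.norm_eq_abs, sq_abs]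
    have hs := Real.sq_sqrt (hDpos x hx).le
    have hlu : l x * ‖u x‖ ^ 2 = √(D x) - ⟪x, u x⟫ :=
      div_mul_cancel₀ _ (pow_ne_zero 2 (hu0 x hx))
    have hsq : √(D x) ^ 2 = ⟪x, u x⟫ ^ 2 + ‖u x‖ ^ 2 * (R ^ 2 - ‖x‖ ^ 2) := hs
    refine mul_right_cancel₀ (pow_ne_zero 2 (hu0 x hx)) ?_
    linear_combination (l x * ‖u x‖ ^ 2 + √(D x) + ⟪x, u x⟫) * hlu + hsq
  · intro x hx
    have h1 : D x = ⟪x, u x⟫ ^ 2 := by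
      simp [hD, mem_sphere_zero_iff_norm.1 hx]
    have h2 : l x = 0 := by
      simp [hl, h1, Real.sqrt_sq (hsph x hx).le]
    simp [h2]

/-- **Brouwer's fixed point theorem** for continuous maps sending a closed ball into its interior. -/
theorem ContinuousOn.exists_fixedPoint_of_mapsTo_ball {R : ℝ} (hR : 0 < R) {f : E → E}
    (hf : ContinuousOn f (closedBall 0 R)) (hmaps : MapsTo f (closedBall 0 R) (ball 0 R)) :
    ∃ x ∈ closedBall 0 R, f x = x := by
  by_contra! hne
  have hcpt := isCompact_closedBall (0 : E) R
  have hnon : (closedBall (0 : E) R).Nonempty := ⟨0, mem_closedBall_self hR.le⟩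
  obtain ⟨F, hF⟩ := ContinuousMap.exists_restrict_eq isClosed_closedBall
    (⟨(closedBall (0 : E) R).domRestrict f, hf.domRestrict⟩ : C(closedBall (0 : E) R, E))
  have hFf : ∀ x ∈ closedBall 0 R, F x = f x := fun x hx => DFunLike.congr_fun hF ⟨x, hx⟩
  obtain ⟨a, ha, hamin⟩ := hcpt.exists_isMinOn hnon
    (continuous_dist.comp_continuousOn (hf.prodMk continuousOn_id))
  obtain ⟨b, hb, hbmin⟩ := hcpt.exists_isMinOn hnon (continuousOn_const (c := R) |>.sub hf.norm)
  have hε : 0 < min (dist (f a) a) (R - ‖f b‖) :=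
    lt_min (dist_pos.2 (hne a ha)) (sub_pos.2 (mem_ball_zero_iff.1 (hmaps hb)))
  obtain ⟨G, hG, hGF, -⟩ := F.continuous.exists_contDiff_approx 1 continuous_const fun _ => hε
  obtain ⟨x, hx, hGx⟩ := ContDiff.exists_fixedPoint_of_mapsTo_ball hR hG fun x hx => by
    have h1 : dist (G x) (f x) < R - ‖f b‖ := hFf x hx ▸ (hGF x).trans_le (min_le_right _ _)
    have h2 : R - ‖f b‖ ≤ R - ‖f x‖ := hbmin hx
    rw [dist_eq_norm] at h1
    rw [mem_ball_zero_iff]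
    linarith [norm_le_norm_add_norm_sub' (G x) (f x)]
  have h1 : dist (G x) (f x) < dist (f a) a := hFf x hx ▸ (hGF x).trans_le (min_le_left _ _)
  have h2 : dist (f a) a ≤ dist (f x) x := hamin hx
  rw [hGx, dist_comm] at h1
  exact h1.not_ge h2

end Brouwer

theorem stmt_6 (k : ℕ) (hk : 1 ≤ k)
    (A B : EuclideanSpace ℂ (Fin k) ≃L[ℂ] EuclideanSpace ℂ (Fin k))
    (s s' ν : ℝ) (hs : 0 < s) (hs' : 0 ≤ s') (hν : 0 ≤ ν)
    (h : s' + ‖((A.trans B).symm :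
        EuclideanSpace ℂ (Fin k) →L[ℂ] EuclideanSpace ℂ (Fin k))‖ * ν < s)
    (g : EuclideanSpace ℂ (Fin k) → EuclideanSpace ℂ (Fin k))
    (hcont : ContinuousOn g (A '' closedBall (0 : EuclideanSpace ℂ (Fin k)) s))
    (hclose : ∀ y ∈ A '' closedBall (0 : EuclideanSpace ℂ (Fin k)) s, ‖g y - B y‖ ≤ ν) :
    (fun x => B (A x)) '' ball (0 : EuclideanSpace ℂ (Fin k)) s' ⊆
      g '' (A '' ball (0 : EuclideanSpace ℂ (Fin k)) s) := by
  rintro _ ⟨x₀, hx₀, rfl⟩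
  let T := A.trans B
  let L : EuclideanSpace ℂ (Fin k) →L[ℂ] EuclideanSpace ℂ (Fin k) := T.symm
  let _ : InnerProductSpace ℝ (EuclideanSpace ℂ (Fin k)) := InnerProductSpace.rclikeToReal ℂ _
  have : FiniteDimensional ℝ (EuclideanSpace ℂ (Fin k)) :=
    FiniteDimensional.complexToReal _
  have hmaps : MapsTo (fun x => x₀ - L (g (A x) - B (A x))) (closedBall 0 s) (ball 0 s) := by
    intro x hx
    rw [mem_ball_zero_iff] at hx₀ ⊢
    have h1 := L.le_opNorm_of_le (hclose (A x) (mem_image_of_mem A hx))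
    exact (norm_sub_le _ _).trans_lt ((add_lt_add_of_lt_of_le hx₀ h1).trans h)
  have hgA : ContinuousOn (fun x => g (A x)) (closedBall 0 s) :=
    hcont.comp A.continuous.continuousOn (mapsTo_image A _)
  obtain ⟨x, hx, hfix⟩ := ContinuousOn.exists_fixedPoint_of_mapsTo_ball hs
    (continuousOn_const.sub (L.continuous.comp_continuousOn
      (hgA.sub (B.continuous.comp A.continuous).continuousOn))) hmaps
  refine ⟨A x, mem_image_of_mem A (hfix ▸ hmaps hx), ?_⟩
  have hLx : L (B (A x)) = x := T.symm_apply_apply x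
  have hL : L (g (A x)) = x₀ := by
    have h2 : x₀ - (L (g (A x)) - L (B (A x))) = x := by rw [← map_sub]; exact hfix
    rw [hLx] at h2
    rw [sub_sub_eq_add_sub, sub_eq_iff_eq_add, add_comm x] at h2
    exact (add_right_cancel h2).symm
  change g (A x) = T x₀
  exact (T.symm_apply_eq).1 hL
end

section
/- Let k ≥ 1 and η > 0. Let (M_n)_{n≥1} be continuous linear automorphisms of ℂ^k and define A_0 = id, A_{n+1} = M_{n+1} ∘ A_n. Let (s_n)_{n≥0} be positive reals with s_0 ≤ η, let (ν_n)_{n≥0} be nonnegative reals, and let (g_n)_{n≥1} be maps ℂ^k → ℂ^k such that, for every n ≥ 0: (i) g_{n+1} is continuous on A_n[B̄(0,s_n)]; (ii) ‖g_{n+1}(u) − M_{n+1}(u)‖ ≤ ν_n for every u ∈ A_n[B̄(0,s_n)]; (iii) s_{n+1} + ‖A_{n+1}⁻¹‖·ν_n < s_n. Then for every n ≥ 0, A_n[B(0,s_n)] ⊆ (g_n ∘ g_{n−1} ∘ ⋯ ∘ g_1)[B(0,η)], where for n = 0 the composition is the identity. -/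
open Metric

/-- The radial projection onto the closed ball of radius `R` centered at the origin. -/
noncomputable def radialProj {E : Type*} [NormedAddCommGroup E] [NormedSpace ℝ E] (R : ℝ)
    (x : E) : E :=
  (R / max R ‖x‖) • x

section RadialProj

variable {E : Type*} [NormedAddCommGroup E] [NormedSpace ℝ E] {R : ℝ}

lemma norm_radialProj (hR : 0 < R) (x : E) : ‖radialProj R x‖ = R / max R ‖x‖ * ‖x‖ := by
  have : 0 < max R ‖x‖ := lt_max_of_lt_left hR
  rw [radialProj, norm_smul, Real.norm_of_nonneg (by positivity)]

lemma radialProj_mem_closedBall (hR : 0 < R) (x : E) : radialProj R x ∈ closedBall (0 : E) R := by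
  have : 0 < max R ‖x‖ := lt_max_of_lt_left hR
  rw [mem_closedBall_zero_iff, norm_radialProj hR, div_mul_eq_mul_div, div_le_iff₀ this]
  gcongr
  exact le_max_right _ _

lemma radialProj_of_mem_closedBall (hR : 0 < R) {x : E} (hx : x ∈ closedBall (0 : E) R) :
    radialProj R x = x := by
  rw [mem_closedBall_zero_iff] at hx
  rw [radialProj, max_eq_left hx, div_self hR.ne', one_smul]

lemma radialProj_mem_sphere (hR : 0 < R) {x : E} (hx : x ∉ closedBall (0 : E) R) :
    radialProj R x ∈ sphere (0 : E) R := by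
  rw [mem_closedBall_zero_iff, not_le] at hx
  rw [mem_sphere_zero_iff_norm, norm_radialProj hR, max_eq_right hx.le,
    div_mul_cancel₀ _ (hR.trans hx).ne']

lemma lipschitzWith_radialProj (hR : 0 < R) : LipschitzWith 2 (radialProj R : E → E) := by
  refine LipschitzWith.of_dist_le_mul fun x y => ?_
  rw [dist_eq_norm, dist_eq_norm]
  have hx : 0 < max R ‖x‖ := lt_max_of_lt_left hR
  have hy : 0 < max R ‖y‖ := lt_max_of_lt_left hR
  have hsplit : radialProj R x - radialProj R y =
      (R / max R ‖x‖) • (x - y) + (R / max R ‖x‖ - R / max R ‖y‖) • y := by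
    simp only [radialProj]; module
  have hle : R / max R ‖x‖ ≤ 1 := div_le_one_of_le₀ (le_max_left _ _) hx.le
  have hle' : ‖y‖ / max R ‖y‖ ≤ 1 := div_le_one_of_le₀ (le_max_right _ _) hy.le
  have hmax : |max R ‖y‖ - max R ‖x‖| ≤ ‖x - y‖ := by
    rw [norm_sub_rev]
    exact (by simpa only [max_comm] using abs_max_sub_max_le_abs ‖y‖ ‖x‖ R : _ ≤ |‖y‖ - ‖x‖|).trans (abs_norm_sub_norm_le y x)
  have hsecond : ‖(R / max R ‖x‖ - R / max R ‖y‖) • y‖ ≤ ‖x - y‖ := by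
    have : R / max R ‖x‖ - R / max R ‖y‖ =
        R / max R ‖x‖ * ((max R ‖y‖ - max R ‖x‖) / max R ‖y‖) := by
      field_simp
    rw [this, norm_smul, norm_mul, norm_div (max R ‖y‖ - max R ‖x‖), Real.norm_of_nonneg hy.le,
      Real.norm_of_nonneg (by positivity : 0 ≤ R / max R ‖x‖), Real.norm_eq_abs]
    calc R / max R ‖x‖ * (|max R ‖y‖ - max R ‖x‖| / max R ‖y‖) * ‖y‖
        = R / max R ‖x‖ * |max R ‖y‖ - max R ‖x‖| * (‖y‖ / max R ‖y‖) := by ring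
      _ ≤ 1 * ‖x - y‖ * 1 := by gcongr
      _ = ‖x - y‖ := by ring
  have hfirst : ‖(R / max R ‖x‖) • (x - y)‖ ≤ ‖x - y‖ := by
    rw [norm_smul, Real.norm_of_nonneg (by positivity)]
    exact mul_le_of_le_one_left (norm_nonneg _) hle
  rw [hsplit]
  refine (norm_add_le _ _).trans ?_
  push_cast
  linarith

/-- A small Lipschitz perturbation of the identity that vanishes on the sphere permutes the
closed ball. -/
lemma bijOn_closedBall_of_lipschitzOnWith [CompleteSpace E] (hR : 0 < R) {p : E → E} {K : NNReal}
    (hp : LipschitzOnWith K p (closedBall 0 R)) (hK : K * 2 < 1)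
    (hp0 : ∀ x ∈ sphere (0 : E) R, p x = 0) :
    Set.BijOn (fun x => x + p x) (closedBall 0 R) (closedBall 0 R) := by
  have hq : LipschitzWith (K * 2) (fun x => p (radialProj R x)) := by
    rw [← lipschitzOnWith_univ]
    exact hp.comp ((lipschitzWith_radialProj hR).lipschitzOnWith)
      (fun x _ => radialProj_mem_closedBall hR x)
  have hc : ∀ y : E, ContractingWith (K * 2) (fun x => y - p (radialProj R x)) := fun y =>
    ⟨hK, by simpa using (LipschitzWith.const y).sub hq⟩
  have hin : ∀ x ∈ closedBall (0 : E) R, p (radialProj R x) = p x := fun x hx => by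
    rw [radialProj_of_mem_closedBall hR hx]
  have hout : ∀ x ∉ closedBall (0 : E) R, p (radialProj R x) = 0 := fun x hx =>
    hp0 _ (radialProj_mem_sphere hR hx)
  have hinj : ∀ x y : E, x + p (radialProj R x) = y + p (radialProj R y) → x = y := fun x y h =>
    (hc (y + p (radialProj R y))).fixedPoint_unique' (sub_eq_iff_eq_add.2 h.symm)
      (sub_eq_iff_eq_add.2 rfl)
  refine ⟨fun x hx => ?_, fun x hx y hy h => ?_, fun y hy => ?_⟩
  · by_contra hx'
    have h := hinj x (x + p x) (by rw [hin x hx, hout _ hx', add_zero])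
    exact hx' (h.subst (motive := (· ∈ closedBall (0 : E) R)) hx)
  · exact hinj x y (by rwa [hin x hx, hin y hy])
  · have h := (hc y).fixedPoint_isFixedPt
    set x := ContractingWith.fixedPoint _ (hc y)
    have h' : x + p (radialProj R x) = y := by
      rw [← sub_eq_iff_eq_add.1 h]
    by_cases hx : x ∈ closedBall (0 : E) R
    · exact ⟨x, hx, by rw [← h', hin x hx]⟩
    · rw [hout x hx, add_zero] at h'
      exact absurd (h' ▸ hy) hx

end RadialProj

/-- The determinant of `1 + L` is a fixed linear combination of the determinants of `1 + v i • L`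
as soon as there are more than `dim V` nodes `v i`. -/
lemma LinearMap.det_one_add_eq_sum_lagrange {F V ι : Type*} [Field F] [AddCommGroup V] [Module F V]
    [FiniteDimensional F V] [DecidableEq ι] {S : Finset ι} {v : ι → F} (hv : Set.InjOn v S)
    (hS : Module.finrank F V < S.card) (L : V →ₗ[F] V) :
    LinearMap.det (1 + L) =
      ∑ i ∈ S, LinearMap.det (1 + v i • L) * (Lagrange.basis S v i).eval 1 := by
  classical
  let b := Module.finBasis F V
  let B := LinearMap.toMatrix b b L
  let P : Polynomial F := ((Polynomial.X : Polynomial F) • B.map Polynomial.C +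
    (1 : Matrix _ _ F).map Polynomial.C).det
  have hP : ∀ t : F, P.eval t = LinearMap.det (1 + t • L) := fun t => by
    rw [← LinearMap.det_toMatrix b, ← Polynomial.coe_evalRingHom, RingHom.map_det]
    congr 1
    ext i j
    simp [B, LinearMap.toMatrix_one, Matrix.one_apply, apply_ite (Polynomial.eval t)]
    ring
  have hdeg : P.degree < S.card := by
    refine Polynomial.degree_le_natDegree.trans_lt ?_
    have := Polynomial.natDegree_det_X_add_C_le B 1
    rw [Fintype.card_fin] at this
    exact_mod_cast this.trans_lt hS
  have h := congrArg (Polynomial.eval 1) (Lagrange.eq_interpolate hv hdeg)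
  simpa [Lagrange.interpolate_apply, Polynomial.eval_finsetSum, hP] using h

section NoRetraction

open MeasureTheory

/-- If a `C¹` displacement `p` vanishes on the sphere, then the integral of the Jacobian of `x + p x`
over the ball is the volume of the ball. -/
lemma integral_det_one_add_fderiv {E : Type*} [NormedAddCommGroup E] [NormedSpace ℝ E]
    [FiniteDimensional ℝ E] [MeasurableSpace E] [BorelSpace E] (μ : Measure E) [μ.IsAddHaarMeasure]
    {R : ℝ} (hR : 0 < R) {p : E → E} (hp : ContDiff ℝ 1 p) (hp0 : ∀ x ∈ sphere (0 : E) R, p x = 0) :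
    ∫ x in closedBall (0 : E) R, (1 + fderiv ℝ p x).det ∂μ = μ.real (closedBall 0 R) := by
  have hB : IsCompact (closedBall (0 : E) R) := isCompact_closedBall 0 R
  have hdp : Continuous (fderiv ℝ p) := hp.continuous_fderiv one_ne_zero
  obtain ⟨C, hC⟩ := hB.exists_bound_of_continuousOn hdp.continuousOn
  have hdet : ∀ᶠ L : E →L[ℝ] E in nhds 0, 0 < (1 + L).det := by
    have hc : Continuous fun L : E →L[ℝ] E => (1 + L).det :=
      ContinuousLinearMap.continuous_det.comp (continuous_const.add continuous_id)
    refine hc.continuousAt.eventually_const_lt ?_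
    simp [ContinuousLinearMap.det]
  obtain ⟨δ, hδ, hdet⟩ := Metric.eventually_nhds_iff_ball.1 hdet
  obtain ⟨τ, hτ, hτδ, hτ2⟩ : ∃ τ : ℝ, 0 < τ ∧ τ * |C| < δ ∧ τ * |C| * 2 < 1 := by
    have h1 : ∀ᶠ t : ℝ in nhds 0, t * |C| < δ :=
      (by fun_prop : Continuous fun t : ℝ => t * |C|).continuousAt.eventually_lt_const (by simpa)
    have h2 : ∀ᶠ t : ℝ in nhds 0, t * |C| * 2 < 1 :=
      (by fun_prop : Continuous fun t : ℝ => t * |C| * 2).continuousAt.eventually_lt_const (by simp)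
    obtain ⟨t, ht, h⟩ := (((h1.and h2).filter_mono nhdsWithin_le_nhds).and
      (self_mem_nhdsWithin (s := Set.Ioi (0 : ℝ)))).exists
    exact ⟨t, h, ht⟩
  have hsmall : ∀ t : ℝ, 0 < t → t ≤ τ →
      ∫ x in closedBall (0 : E) R, (1 + t • fderiv ℝ p x).det ∂μ = μ.real (closedBall 0 R) := by
    intro t ht htτ
    have hbound : ∀ x ∈ closedBall (0 : E) R, ‖t • fderiv ℝ p x‖ ≤ τ * |C| := fun x hx => by
      rw [norm_smul, Real.norm_of_nonneg ht.le]
      gcongr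
      exact (hC x hx).trans (le_abs_self C)
    have hderiv : ∀ x, HasFDerivAt (fun x => t • p x) (t • fderiv ℝ p x) x := fun x =>
      ((hp.differentiable one_ne_zero) x).hasFDerivAt.const_smul t
    have hlip : LipschitzOnWith (Real.toNNReal (τ * |C|)) (fun x => t • p x) (closedBall 0 R) :=
      (convex_closedBall (0 : E) R).lipschitzOnWith_of_nnnorm_hasFDerivWithin_le
        (fun x _ => (hderiv x).hasFDerivWithinAt) fun x hx => by
          rw [← NNReal.coe_le_coe, Real.coe_toNNReal _ (by positivity)]
          exact hbound x hx
    have hbij := bijOn_closedBall_of_lipschitzOnWith hR hlip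
      (by
        rw [← NNReal.coe_lt_coe]
        push_cast
        rwa [Real.coe_toNNReal _ (by positivity)])
      (fun x hx => by rw [hp0 x hx, smul_zero])
    have hcov := integral_image_eq_integral_abs_det_fderiv_smul μ
      (measurableSet_closedBall (x := (0 : E)) (ε := R))
      (f' := fun x => 1 + t • fderiv ℝ p x)
      (fun x _ => ((hasFDerivAt_id x).add (hderiv x)).hasFDerivWithinAt) hbij.injOn
      (fun _ => (1 : ℝ))
    have himage : (id + fun x => t • p x) '' closedBall (0 : E) R = closedBall 0 R :=
      hbij.image_eq
    rw [himage] at hcov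
    simp only [integral_const, smul_eq_mul, mul_one, measureReal_restrict_apply_univ] at hcov
    rw [hcov]
    refine setIntegral_congr_fun measurableSet_closedBall fun x hx => (abs_of_pos ?_).symm
    exact hdet _ (by simpa using (hbound x hx).trans_lt hτδ)
  let S : Finset ℕ := Finset.range (Module.finrank ℝ E + 1)
  let v : ℕ → ℝ := fun i => τ / (i + 1)
  have hv : Set.InjOn v S := fun i _ j _ h => by
    have hi : (i : ℝ) + 1 ≠ 0 := by positivity
    have hj : (j : ℝ) + 1 ≠ 0 := by positivity
    simp only [v] at h
    rw [div_eq_div_iff hi hj, mul_right_inj' hτ.ne'] at h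
    exact_mod_cast (add_right_cancel h).symm
  have hvpos : ∀ i, 0 < v i := fun i => by positivity
  have hvle : ∀ i, v i ≤ τ := fun i => div_le_self hτ.le (by simp)
  have hexpand : ∀ x, (1 + fderiv ℝ p x).det =
      ∑ i ∈ S, (1 + v i • fderiv ℝ p x).det * (Lagrange.basis S v i).eval 1 := fun x =>
    LinearMap.det_one_add_eq_sum_lagrange hv (by simp [S]) (fderiv ℝ p x : E →ₗ[ℝ] E)
  have hint : ∀ i ∈ S, IntegrableOn
      (fun x => (1 + v i • fderiv ℝ p x).det * (Lagrange.basis S v i).eval 1)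
      (closedBall (0 : E) R) μ := fun i _ =>
    ((ContinuousLinearMap.continuous_det.comp
      (continuous_const.add (hdp.const_smul (v i)))).mul continuous_const).continuousOn
      |>.integrableOn_compact hB
  simp_rw [hexpand]
  rw [integral_finsetSum _ hint]
  simp_rw [integral_mul_const, hsmall _ (hvpos _) (hvle _)]
  rw [← Finset.mul_sum, ← Polynomial.eval_finsetSum, Lagrange.sum_basis hv (by simp [S]),
    Polynomial.eval_one, mul_one]

variable {E : Type*} [NormedAddCommGroup E] [InnerProductSpace ℝ E] [FiniteDimensional ℝ E] {R : ℝ}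

/-- There is no `C¹` map onto a sphere that fixes the sphere pointwise. -/
theorem not_contDiff_retraction_sphere (hR : 0 < R) {f : E → E} (hf : ContDiff ℝ 1 f)
    (hnorm : ∀ x, ‖f x‖ = R) (hfix : ∀ x ∈ sphere (0 : E) R, f x = x) : False := by
  borelize E
  have hdiff : Differentiable ℝ f := hf.differentiable one_ne_zero
  have hint := integral_det_one_add_fderiv (volume : Measure E) hR
    (p := f - id) (hf.sub contDiff_id)
    (fun x hx => by simp [hfix x hx])
  have hzero : ∀ x, (1 + fderiv ℝ (f - id) x).det = 0 := fun x => by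
    have hderiv : 1 + fderiv ℝ (f - id) x = fderiv ℝ f x := by
      rw [fderiv_sub (hdiff x) differentiableAt_id, fderiv_id]
      exact add_sub_cancel _ _
    rw [hderiv]
    by_contra hdet
    have hunit : IsUnit (fderiv ℝ f x : E →ₗ[ℝ] E) :=
      (LinearMap.isUnit_iff_isUnit_det _).2 (isUnit_iff_ne_zero.2 hdet)
    obtain ⟨w, hw⟩ := ((Module.End.isUnit_iff _).1 hunit).surjective (f x)
    have hconst : (fun y => inner ℝ (f y) (f y)) = fun _ : E => R ^ 2 := by
      ext y; rw [real_inner_self_eq_norm_sq, hnorm]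
    have hd := (hdiff x).hasFDerivAt.inner ℝ (hdiff x).hasFDerivAt
    rw [hconst] at hd
    have h := congrArg (fun L => L w) (hd.unique (hasFDerivAt_const (R ^ 2) x))
    have hw' : fderiv ℝ f x w = f x := hw
    simp [fderivInnerCLM_apply, hw', hnorm, hR.ne'] at h
  simp_rw [hzero, integral_zero] at hint
  exact (ENNReal.toReal_pos (measure_closedBall_pos volume (0 : E) hR).ne'
    measure_closedBall_lt_top.ne).ne hint

/-- A `C¹` self-map of a space that takes values in an open ball has a fixed point there. -/
lemma exists_fixedPoint_of_contDiff (hR : 0 < R) {h : E → E} (hh : ContDiff ℝ 1 h)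
    (hlt : ∀ x, ‖h x‖ < R) : ∃ x, h x = x := by
  by_contra! hne
  let χ : ContDiffBump (0 : E) := ⟨R, 2 * R, hR, by linarith⟩
  let F : E → E := fun x => x - χ x • h x
  have hF : ContDiff ℝ 1 F := contDiff_id.sub (χ.contDiff.smul hh)
  have hF0 : ∀ x, F x ≠ 0 := fun x hx => by
    have hx' : x = χ x • h x := sub_eq_zero.1 hx
    have hxR : x ∈ closedBall (0 : E) R := by
      rw [mem_closedBall_zero_iff, hx', norm_smul, Real.norm_of_nonneg χ.nonneg]
      exact (mul_le_of_le_one_left (norm_nonneg _) χ.le_one).trans (hlt x).le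
    rw [χ.one_of_mem_closedBall hxR, one_smul] at hx'
    exact hne x hx'.symm
  refine not_contDiff_retraction_sphere (R := 2 * R) (by positivity)
    (f := fun x => (2 * R / ‖F x‖) • F x)
    ((contDiff_const.div (hF.norm ℝ hF0) fun x => norm_ne_zero_iff.2 (hF0 x)).smul hF) ?_ ?_
  · intro x
    rw [norm_smul, Real.norm_of_nonneg (by positivity),
      div_mul_cancel₀ _ (norm_ne_zero_iff.2 (hF0 x))]
  · intro x hx
    rw [mem_sphere_zero_iff_norm] at hx
    have hχ : χ x = 0 := χ.zero_of_le_dist (by simp [χ, hx])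
    simp [F, hχ, hx, hR.ne']

/-- **Brouwer fixed point theorem** for continuous maps of a closed ball into a smaller ball. -/
theorem exists_fixedPoint_of_continuousOn_closedBall {h : E → E} {r : ℝ} (hR : 0 < R) (hr : r < R)
    (hh : ContinuousOn h (closedBall 0 R)) (hle : ∀ x ∈ closedBall (0 : E) R, ‖h x‖ ≤ r) :
    ∃ x ∈ closedBall (0 : E) R, h x = x := by
  by_contra! hne
  have hB : IsCompact (closedBall (0 : E) R) := isCompact_closedBall 0 R
  have hpos : ∀ x ∈ closedBall (0 : E) R, 0 < ‖h x - x‖ := fun x hx =>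
    norm_pos_iff.2 (sub_ne_zero.2 (hne x hx))
  obtain ⟨ε, hε, hεle⟩ := hB.exists_forall_le' (hh.sub continuousOn_id).norm hpos
  have hH : Continuous fun x => h (radialProj R x) :=
    hh.comp_continuous (lipschitzWith_radialProj hR).continuous (radialProj_mem_closedBall hR)
  obtain ⟨g, hg, hgH, -⟩ := hH.exists_contDiff_approx 1
    (continuous_const (y := min ε (R - r))) fun _ => lt_min hε (sub_pos.2 hr)
  have hglt : ∀ x, ‖g x‖ < R := fun x => by
    have h1 := (hgH x).trans_le (min_le_right _ _)
    have h2 := hle _ (radialProj_mem_closedBall hR x)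
    rw [dist_eq_norm] at h1
    linarith [norm_le_norm_sub_add (g x) (h (radialProj R x))]
  obtain ⟨x, hx⟩ := exists_fixedPoint_of_contDiff hR hg hglt
  have hxB : x ∈ closedBall (0 : E) R := by
    rw [mem_closedBall_zero_iff, ← hx]
    exact (hglt x).le
  have h1 := (hgH x).trans_le (min_le_left _ _)
  rw [radialProj_of_mem_closedBall hR hxB, hx, dist_comm, dist_eq_norm] at h1
  exact (hεle x hxB).not_gt h1

end NoRetraction

theorem stmt_7 (k : ℕ) (hk : 1 ≤ k) (η : ℝ) (hη : 0 < η)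
    (M A : ℕ → (EuclideanSpace ℂ (Fin k) ≃L[ℂ] EuclideanSpace ℂ (Fin k)))
    (hA0 : A 0 = ContinuousLinearEquiv.refl ℂ (EuclideanSpace ℂ (Fin k)))
    (hA : ∀ n : ℕ, A (n + 1) = (A n).trans (M (n + 1)))
    (s : ℕ → ℝ) (hs : ∀ n, 0 < s n) (hs0 : s 0 ≤ η)
    (ν : ℕ → ℝ) (hν : ∀ n, 0 ≤ ν n)
    (g : ℕ → EuclideanSpace ℂ (Fin k) → EuclideanSpace ℂ (Fin k))
    (hcont : ∀ n : ℕ,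
      ContinuousOn (g (n + 1)) (A n '' closedBall (0 : EuclideanSpace ℂ (Fin k)) (s n)))
    (hclose : ∀ n : ℕ, ∀ u ∈ A n '' closedBall (0 : EuclideanSpace ℂ (Fin k)) (s n),
      ‖g (n + 1) u - M (n + 1) u‖ ≤ ν n)
    (hshrink : ∀ n : ℕ, s (n + 1) +
      ‖((A (n + 1)).symm : EuclideanSpace ℂ (Fin k) →L[ℂ] EuclideanSpace ℂ (Fin k))‖ * ν n
        < s n)
    (G : ℕ → EuclideanSpace ℂ (Fin k) → EuclideanSpace ℂ (Fin k))
    (hG0 : G 0 = id) (hG : ∀ n : ℕ, G (n + 1) = g (n + 1) ∘ G n) :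
    ∀ n : ℕ, A n '' ball (0 : EuclideanSpace ℂ (Fin k)) (s n) ⊆
      G n '' ball (0 : EuclideanSpace ℂ (Fin k)) η := by
  intro n
  induction n with
  | zero =>
    rw [hA0, hG0]
    rintro _ ⟨x, hx, rfl⟩
    exact ⟨x, ball_subset_ball hs0 hx, rfl⟩
  | succ n ih =>
    suffices hstep : A (n + 1) '' ball 0 (s (n + 1)) ⊆ g (n + 1) '' (A n '' ball 0 (s n)) by
      rw [hG, Set.image_comp]
      exact hstep.trans (Set.image_mono ih)
    rintro _ ⟨z, hz, rfl⟩
    let T : EuclideanSpace ℂ (Fin k) →L[ℂ] EuclideanSpace ℂ (Fin k) := (A (n + 1)).symm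
    have hbound : ∀ x ∈ closedBall (0 : EuclideanSpace ℂ (Fin k)) (s n),
        ‖x - T (g (n + 1) (A n x)) + z‖ ≤ ‖T‖ * ν n + ‖z‖ := fun x hx => by
      have hx' : x = T (M (n + 1) (A n x)) := by
        rw [← ContinuousLinearEquiv.trans_apply, ← hA]
        exact ((A (n + 1)).symm_apply_apply x).symm
      refine (norm_add_le _ _).trans (add_le_add_left ?_ _)
      nth_rewrite 1 [hx']
      rw [← map_sub]
      refine T.le_of_opNorm_le_of_le le_rfl ?_
      rw [norm_sub_rev]
      exact hclose n _ ⟨x, hx, rfl⟩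
    have hlt : ‖T‖ * ν n + ‖z‖ < s n := by
      have := hshrink n
      have := mem_ball_zero_iff.1 hz
      linarith
    obtain ⟨x, hx, hfix⟩ := exists_fixedPoint_of_continuousOn_closedBall (hs n) hlt
      ((continuousOn_id.sub (T.continuous.comp_continuousOn
        ((hcont n).comp (A n).continuous.continuousOn (Set.mapsTo_image _ _)))).add
          continuousOn_const) hbound
    have hTz : T (g (n + 1) (A n x)) = z := by
      have hfix' : x - T (g (n + 1) (A n x)) + z = x := hfix
      rw [sub_add, sub_eq_self, sub_eq_zero] at hfix'
      exact hfix'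
    refine ⟨A n x, ⟨x, ?_, rfl⟩, ?_⟩
    · rw [mem_ball_zero_iff]
      have hnorm := hbound x hx
      rw [hTz, sub_add_cancel] at hnorm
      exact hnorm.trans_lt hlt
    · rw [← hTz]
      exact ((A (n + 1)).apply_symm_apply _).symm
end
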